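/- For the 3×n grid graph G_{3,n} = P_3 □ P_n with n ≥ 4, srd(G_{3,n}) = 3. -/

import Mathlib

open SimpleGraph

/-- `F` is an edge-cut of `G` separating `u` and `v`. -/
def CutsBetween {V : Type*} (G : SimpleGraph V) (u v : V) (F : Finset (Sym2 V)) : Prop :=
  ↑F ⊆ G.edgeSet ∧ ¬ (G.deleteEdges ↑F).Reachable u v

/-- `lam G u v` is the minimum number of edges in an edge-cut of `G` separating `u` and `v`. -/
noncomputable def lam {V : Type*} (G : SimpleGraph V) (u v : V) : ℕ :=
  sInf {n | ∃ F : Finset (Sym2 V), CutsBetween G u v F ∧ F.card = n}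

/-- `c` is a strong rainbow disconnection coloring of `G`: every pair of distinct vertices
admits a rainbow minimum edge-cut separating them. -/
def IsSRDColoring {V : Type*} (G : SimpleGraph V) (c : Sym2 V → ℕ) : Prop :=
  ∀ u v : V, u ≠ v → ∃ F : Finset (Sym2 V),
    CutsBetween G u v F ∧ F.card = lam G u v ∧ Set.InjOn c ↑F

/-- The strong rainbow disconnection number of `G`. -/
noncomputable def srd {V : Type*} (G : SimpleGraph V) : ℕ :=
  sInf {k | ∃ c : Sym2 V → ℕ, (∀ e ∈ G.edgeSet, c e < k) ∧ IsSRDColoring G c}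

/-- The `3 × n` grid graph. -/
abbrev grid (n : ℕ) : SimpleGraph (Fin 3 × Fin n) :=
  SimpleGraph.pathGraph 3 □ SimpleGraph.pathGraph n

lemma grid_adj_iff {n : ℕ} (x y : Fin 3 × Fin n) :
    (grid n).Adj x y ↔
      ((x.1.val + 1 = y.1.val ∨ y.1.val + 1 = x.1.val) ∧ x.2 = y.2) ∨
      ((x.2.val + 1 = y.2.val ∨ y.2.val + 1 = x.2.val) ∧ x.1 = y.1) := by
  rw [boxProd_adj, pathGraph_adj, pathGraph_adj]

section Degree

lemma one_le_degree_pathGraph {n : ℕ} (hn : 2 ≤ n) (j : Fin n)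
    [Fintype ((pathGraph n).neighborSet j)] : 1 ≤ (pathGraph n).degree j := by
  rw [Nat.one_le_iff_ne_zero, ← Nat.pos_iff_ne_zero, degree_pos_iff_exists_adj]
  by_cases h : j.val + 1 < n
  · exact ⟨⟨j.val + 1, h⟩, by simp [pathGraph_adj]⟩
  · exact ⟨⟨j.val - 1, by omega⟩, by simp only [pathGraph_adj]; omega⟩

lemma degree_pathGraph_le_two {n : ℕ} (j : Fin n)
    [Fintype ((pathGraph n).neighborSet j)] : (pathGraph n).degree j ≤ 2 := by
  rw [← card_neighborFinset_eq_degree,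
    ← Finset.card_image_of_injective _ Fin.val_injective]
  refine (Finset.card_le_card (t := {j.val - 1, j.val + 1}) ?_).trans Finset.card_le_two
  intro k hk
  simp only [Finset.mem_image, mem_neighborFinset, pathGraph_adj] at hk
  simp only [Finset.mem_insert, Finset.mem_singleton]
  obtain ⟨a, ha, rfl⟩ := hk
  omega

open Classical in
lemma degree_pathGraph_three (i : Fin 3) :
    (pathGraph 3).degree i = if i = 1 then 2 else 1 := by
  have h : ∀ i : Fin 3, (Finset.univ.filter
      fun k : Fin 3 => i.val + 1 = k.val ∨ k.val + 1 = i.val).card = if i = 1 then 2 else 1 := by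
    decide
  rw [← h i, ← card_neighborFinset_eq_degree]
  congr 1
  ext k
  simp [pathGraph_adj]

open Classical in
lemma degree_grid {n : ℕ} (u : Fin 3 × Fin n) :
    (grid n).degree u = (if u.1 = 1 then 2 else 1) + (pathGraph n).degree u.2 := by
  rw [← degree_pathGraph_three, ← degree_boxProd]

end Degree

section Cut

variable {V : Type*} {G : SimpleGraph V}

lemma not_reachable_deleteEdges_of_boundary_subset {F : Set (Sym2 V)} {S : Set V} {u v : V}
    (hS : ∀ x y, x ∈ S → y ∉ S → G.Adj x y → s(x, y) ∈ F) (hu : u ∈ S) (hv : v ∉ S) :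
    ¬ (G.deleteEdges F).Reachable u v := by
  rintro ⟨p⟩
  induction p with
  | nil => exact hv hu
  | @cons a b c h p ih =>
    rw [deleteEdges_adj] at h
    by_cases hb : b ∈ S
    · exact ih hb hv
    · exact h.2 (hS _ _ hu hb h.1)

lemma cutsBetween_comm {u v : V} {F : Finset (Sym2 V)} :
    CutsBetween G u v F ↔ CutsBetween G v u F := by
  simp only [CutsBetween, reachable_comm]

lemma lam_comm (u v : V) : lam G u v = lam G v u := by
  simp only [lam, cutsBetween_comm (u := u)]

lemma lam_eq_card {u v : V} {F : Finset (Sym2 V)} (hF : CutsBetween G u v F)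
    (hmin : ∀ F', CutsBetween G u v F' → F.card ≤ F'.card) : F.card = lam G u v := by
  refine le_antisymm (le_csInf ⟨_, F, hF, rfl⟩ ?_) (Nat.sInf_le ⟨F, hF, rfl⟩)
  rintro _ ⟨F', hF', rfl⟩
  exact hmin F' hF'

lemma cutsBetween_incidenceFinset [DecidableEq V] {u v : V} [Fintype (G.neighborSet u)] (h : u ≠ v) :
    CutsBetween G u v (G.incidenceFinset u) := by
  refine ⟨by simpa using G.incidenceSet_subset u, ?_⟩
  refine not_reachable_deleteEdges_of_boundary_subset (S := {u}) ?_ rfl (by simpa using h.symm)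
  rintro x y rfl - hxy
  simpa [mk'_mem_incidenceSet_left_iff] using hxy

lemma exists_adj_deleteEdges_of_card_lt_degree {u : V} [Fintype (G.neighborSet u)]
    {F : Finset (Sym2 V)} (h : F.card < G.degree u) : ∃ w, (G.deleteEdges F).Adj u w := by
  classical
  rw [← card_incidenceFinset_eq_degree] at h
  obtain ⟨e, he, heF⟩ := Finset.exists_mem_notMem_of_card_lt_card h
  rw [mem_incidenceFinset] at he
  obtain ⟨w, rfl⟩ := Sym2.mem_iff_exists.1 he.2
  exact ⟨w, by rw [deleteEdges_adj]; exact ⟨he.1, by simpa using heF⟩⟩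

end Cut

section Lines

variable {n : ℕ} {F : Finset (Sym2 (Fin 3 × Fin n))}

/-- The vertex `x` lies on the row or column `l`. -/
def OnLine (l : Fin 3 ⊕ Fin n) (x : Fin 3 × Fin n) : Prop :=
  Sum.elim (x.1 = ·) (x.2 = ·) l

/-- Some edge of `F` lies within the row or column `l`. -/
def Meets (F : Finset (Sym2 (Fin 3 × Fin n))) (l : Fin 3 ⊕ Fin n) : Prop :=
  ∃ e ∈ F, ∀ x ∈ e, OnLine l x

lemma OnLine.unique {l m : Fin 3 ⊕ Fin n} {x y : Fin 3 × Fin n} (hxy : x ≠ y)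
    (hx : OnLine l x) (hy : OnLine l y) (hx' : OnLine m x) (hy' : OnLine m y) : l = m := by
  obtain ⟨a, b⟩ := x
  obtain ⟨c, d⟩ := y
  rcases l with l | l <;> rcases m with m | m <;> simp_all [OnLine]

lemma card_le_of_meets (hF : ↑F ⊆ (grid n).edgeSet) {s : Finset (Fin 3 ⊕ Fin n)}
    (hs : ∀ l ∈ s, Meets F l) : s.card ≤ F.card := by
  rcases s.eq_empty_or_nonempty with rfl | ⟨l₀, hl₀⟩
  · simp
  have : Nonempty (Sym2 (Fin 3 × Fin n)) := ⟨(hs l₀ hl₀).choose⟩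
  choose! f hf hfl using hs
  refine Finset.card_le_card_of_injOn f hf ?_
  intro l hl m hm hlm
  have h₁ := hfl l hl
  have h₂ := hfl m hm
  rw [← hlm] at h₂
  have he := hF (hf l hl)
  generalize f l = e at h₁ h₂ he
  induction e with
  | _ x y =>
    exact OnLine.unique (((mem_edgeSet _).1 he).ne) (h₁ x (by simp)) (h₁ y (by simp)) (h₂ x (by simp))
      (h₂ y (by simp))

lemma exists_not_meets (hF : ↑F ⊆ (grid n).edgeSet) (hcard : F.card ≤ 2)
    {a b c : Fin 3 ⊕ Fin n} (hab : a ≠ b) (hac : a ≠ c) (hbc : b ≠ c) :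
    ¬ Meets F a ∨ ¬ Meets F b ∨ ¬ Meets F c := by
  by_contra! h
  have := card_le_of_meets hF (s := {a, b, c}) (by simp [h])
  rw [Finset.card_eq_three.2 ⟨a, b, c, hab, hac, hbc, rfl⟩] at this
  omega

lemma reachable_of_row {i : Fin 3} (h : ¬ Meets F (.inl i)) (j k : Fin n) :
    ((grid n).deleteEdges F).Reachable (i, j) (i, k) := by
  refine (pathGraph_preconnected n j k).map
    (⟨fun j => (i, j), ?_⟩ : pathGraph n →g (grid n).deleteEdges F)
  intro a b hab
  rw [deleteEdges_adj]
  refine ⟨by simpa using hab, fun hmem => h ⟨_, hmem, ?_⟩⟩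
  simp [OnLine]

lemma reachable_of_column {j : Fin n} (h : ¬ Meets F (.inr j)) (i k : Fin 3) :
    ((grid n).deleteEdges F).Reachable (i, j) (k, j) := by
  refine (pathGraph_preconnected 3 i k).map
    (⟨fun i => (i, j), ?_⟩ : pathGraph 3 →g (grid n).deleteEdges F)
  intro a b hab
  rw [deleteEdges_adj]
  refine ⟨by simpa using hab, fun hmem => h ⟨_, hmem, ?_⟩⟩
  simp [OnLine]

lemma reachable_of_adj (hF : ↑F ⊆ (grid n).edgeSet) (hcard : F.card ≤ 2)
    {i : Fin 3} {j : Fin n} (hi : ¬ Meets F (.inl i)) (hj : ¬ Meets F (.inr j))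
    {w w' : Fin 3 × Fin n} (hw : ((grid n).deleteEdges F).Adj w w') :
    ((grid n).deleteEdges F).Reachable w (i, j) := by
  have key : ∀ x : Fin 3 × Fin n, ¬ Meets F (.inl x.1) ∨ ¬ Meets F (.inr x.2) →
      ((grid n).deleteEdges F).Reachable x (i, j) := by
    rintro ⟨a, b⟩ (h | h)
    · exact (reachable_of_row h b j).trans (reachable_of_column hj a i)
    · exact (reachable_of_column h a i).trans (reachable_of_row hi b j)
  by_cases h : ¬ Meets F (.inl w.1) ∨ ¬ Meets F (.inr w.2)
  · exact key w h
  push Not at h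
  refine hw.reachable.trans (key w' ?_)
  have hadj := (deleteEdges_adj.1 hw).1
  rw [boxProd_adj] at hadj
  rcases hadj with ⟨h₁, -⟩ | ⟨h₁, -⟩
  · have := exists_not_meets hF hcard (a := .inl w.1) (b := .inr w.2) (c := .inl w'.1)
      (by simp) (by simpa using h₁.ne) (by simp)
    tauto
  · have := exists_not_meets hF hcard (a := .inl w.1) (b := .inr w.2) (c := .inr w'.2)
      (by simp) (by simp) (by simpa using h₁.ne)
    tauto

open Classical in
/-- The local edge-connectivity of the grid is at least the minimum of `3` and the degrees of
the two vertices. -/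
lemma le_card_of_cutsBetween (hn : 3 ≤ n) {u v : Fin 3 × Fin n} {k : ℕ} (hk : k ≤ 3)
    (hu : k ≤ (grid n).degree u) (hv : k ≤ (grid n).degree v)
    (hF : CutsBetween (grid n) u v F) : k ≤ F.card := by
  by_contra! hlt
  have hcard : F.card ≤ 2 := by omega
  obtain ⟨i, hi⟩ : ∃ i : Fin 3, ¬ Meets F (.inl i) := by
    have := exists_not_meets hF.1 hcard (a := .inl 0) (b := .inl 1) (c := .inl 2)
      (by simp) (by simp) (by simp)
    tauto
  obtain ⟨j, hj⟩ : ∃ j : Fin n, ¬ Meets F (.inr j) := by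
    have := exists_not_meets hF.1 hcard (a := .inr ⟨0, by omega⟩) (b := .inr ⟨1, by omega⟩)
      (c := .inr ⟨2, by omega⟩) (by simp) (by simp) (by simp)
    tauto
  obtain ⟨u', hu'⟩ := exists_adj_deleteEdges_of_card_lt_degree (hlt.trans_le hu)
  obtain ⟨v', hv'⟩ := exists_adj_deleteEdges_of_card_lt_degree (hlt.trans_le hv)
  exact hF.2 ((reachable_of_adj hF.1 hcard hi hj hu').trans
    (reachable_of_adj hF.1 hcard hi hj hv').symm)

end Lines

section Coloring

variable {n : ℕ}

/-- The edge from `(i, j)` to `(i, j + 1)` gets color `i + j` and the edge from `(i, j)` to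
`(i + 1, j)` gets color `2 * i + 1 + j`, both modulo `3`. -/
def gridColoring (n : ℕ) : Sym2 (Fin 3 × Fin n) → ℕ :=
  Sym2.lift ⟨fun x y => if x.1 = y.1 then (x.1.val + min x.2.val y.2.val) % 3
    else (x.1.val + y.1.val + min x.2.val y.2.val) % 3, by
      intro x y
      simp only [eq_comm (a := x.1), min_comm x.2.val, add_comm x.1.val y.1.val]
      split_ifs with h
      · rw [h]
      · rfl⟩

lemma gridColoring_mk (x y : Fin 3 × Fin n) :
    gridColoring n s(x, y) = if x.1 = y.1 then (x.1.val + min x.2.val y.2.val) % 3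
      else (x.1.val + y.1.val + min x.2.val y.2.val) % 3 := rfl

lemma gridColoring_lt (e : Sym2 (Fin 3 × Fin n)) : gridColoring n e < 3 := by
  induction e with
  | _ x y =>
    rw [gridColoring_mk]
    split_ifs <;> exact Nat.mod_lt _ (by norm_num)

lemma injOn_gridColoring_incidenceSet {u : Fin 3 × Fin n} (hu : u.1 ≠ 1) :
    Set.InjOn (gridColoring n) ((grid n).incidenceSet u) := by
  rintro e ⟨he, hue⟩ f ⟨hf, huf⟩ hef
  obtain ⟨w, rfl⟩ := Sym2.mem_iff_exists.1 hue
  obtain ⟨z, rfl⟩ := Sym2.mem_iff_exists.1 huf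
  rw [mem_edgeSet, grid_adj_iff] at he hf
  simp only [gridColoring_mk] at hef
  obtain ⟨⟨a, ha⟩, ⟨b, hb⟩⟩ := u
  obtain ⟨⟨c, hc⟩, ⟨d, hd⟩⟩ := w
  obtain ⟨⟨p, hp⟩, ⟨q, hq⟩⟩ := z
  simp only [ne_eq, Fin.ext_iff, Fin.val_one] at *
  suffices c = p ∧ d = q by simp [this]
  split_ifs at hef <;> omega

/-- The edges joining column `j` to column `j + 1`. -/
def columnCut (j : ℕ) (hj : j + 1 < n) : Finset (Sym2 (Fin 3 × Fin n)) :=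
  Finset.univ.image fun i : Fin 3 => s((i, ⟨j, by omega⟩), (i, ⟨j + 1, hj⟩))

lemma card_columnCut_le (j : ℕ) (hj : j + 1 < n) : (columnCut j hj).card ≤ 3 :=
  Finset.card_image_le

lemma injOn_gridColoring_columnCut (j : ℕ) (hj : j + 1 < n) :
    Set.InjOn (gridColoring n) (columnCut j hj) := by
  intro e he f hf hef
  simp only [columnCut, Finset.coe_image, Finset.coe_univ, Set.image_univ, Set.mem_range] at he hf
  obtain ⟨a, rfl⟩ := he
  obtain ⟨b, rfl⟩ := hf
  simp only [gridColoring_mk, if_true] at hef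
  have : a = b := by omega
  rw [this]

lemma cutsBetween_columnCut {j : ℕ} (hj : j + 1 < n) {u v : Fin 3 × Fin n}
    (hu : u.2.val ≤ j) (hv : j < v.2.val) : CutsBetween (grid n) u v (columnCut j hj) := by
  constructor
  · intro e he
    simp only [columnCut, Finset.coe_image, Finset.coe_univ, Set.image_univ, Set.mem_range] at he
    obtain ⟨a, rfl⟩ := he
    simp [pathGraph_adj]
  · refine not_reachable_deleteEdges_of_boundary_subset (S := {x : Fin 3 × Fin n | x.2.val ≤ j})
      ?_ hu (by simpa using hv)
    rintro ⟨a, b⟩ ⟨c, d⟩ hx hy hxy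
    simp only [Set.mem_ofPred_eq, not_le] at hx hy
    rw [grid_adj_iff] at hxy
    simp only at hxy
    have hac : a = c := by omega
    have hb : b = ⟨j, by omega⟩ := by ext; simp only; omega
    have hd : d = ⟨j + 1, hj⟩ := by ext; simp only; omega
    simp [columnCut, hac, hb, hd]

/-- The vertices `u` and `v` have a minimum edge-cut on which `c` is injective. -/
def HasRainbowMinCut {V : Type*} (G : SimpleGraph V) (c : Sym2 V → ℕ) (u v : V) : Prop :=
  ∃ F : Finset (Sym2 V), CutsBetween G u v F ∧ F.card = lam G u v ∧ Set.InjOn c ↑F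

lemma HasRainbowMinCut.symm {V : Type*} {G : SimpleGraph V} {c : Sym2 V → ℕ} {u v : V}
    (h : HasRainbowMinCut G c u v) : HasRainbowMinCut G c v u := by
  obtain ⟨F, hF, hcard, hc⟩ := h
  exact ⟨F, cutsBetween_comm.1 hF, hcard.trans (lam_comm u v), hc⟩

open Classical in
lemma hasRainbowMinCut_of_degree_le (hn : 3 ≤ n) {u v : Fin 3 × Fin n} (huv : u ≠ v)
    (hu : u.1 ≠ 1) (hdeg : (grid n).degree u ≤ (grid n).degree v) :
    HasRainbowMinCut (grid n) (gridColoring n) u v := by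
  have hcut := cutsBetween_incidenceFinset (G := grid n) huv
  refine ⟨_, hcut, lam_eq_card hcut fun F' hF' => ?_, ?_⟩
  · rw [card_incidenceFinset_eq_degree]
    refine le_card_of_cutsBetween hn ?_ le_rfl hdeg hF'
    have := degree_pathGraph_le_two u.2
    rw [degree_grid, if_neg hu]
    omega
  · simpa using injOn_gridColoring_incidenceSet hu

open Classical in
lemma three_le_degree_grid (hn : 2 ≤ n) {u : Fin 3 × Fin n} (hu : u.1 = 1) :
    3 ≤ (grid n).degree u := by
  have := one_le_degree_pathGraph hn u.2
  rw [degree_grid, if_pos hu]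
  omega

lemma hasRainbowMinCut_of_column_lt (hn : 3 ≤ n) {u v : Fin 3 × Fin n}
    (hu : u.1 = 1) (hv : v.1 = 1) (h : u.2 < v.2) :
    HasRainbowMinCut (grid n) (gridColoring n) u v := by
  have hj : u.2.val + 1 < n := by omega
  have hcut := cutsBetween_columnCut hj le_rfl h
  refine ⟨_, hcut, lam_eq_card hcut fun F' hF' => ?_, injOn_gridColoring_columnCut _ hj⟩
  exact (card_columnCut_le _ hj).trans (le_card_of_cutsBetween hn le_rfl
    (three_le_degree_grid (by omega) hu) (three_le_degree_grid (by omega) hv) hF')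

lemma isSRDColoring_gridColoring (hn : 3 ≤ n) : IsSRDColoring (grid n) (gridColoring n) := by
  classical
  intro u v huv
  change HasRainbowMinCut _ _ u v
  have du := degree_grid u
  have dv := degree_grid v
  have := degree_pathGraph_le_two u.2
  have := degree_pathGraph_le_two v.2
  have := one_le_degree_pathGraph (by omega) u.2
  have := one_le_degree_pathGraph (by omega) v.2
  by_cases hu : u.1 = 1 <;> by_cases hv : v.1 = 1
  · rcases lt_trichotomy u.2 v.2 with h | h | h
    · exact hasRainbowMinCut_of_column_lt hn hu hv h
    · exact absurd (Prod.ext (hu.trans hv.symm) h) huv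
    · exact (hasRainbowMinCut_of_column_lt hn hv hu h).symm
  · rw [if_pos hu] at du
    rw [if_neg hv] at dv
    exact (hasRainbowMinCut_of_degree_le hn huv.symm hv (by omega)).symm
  · rw [if_neg hu] at du
    rw [if_pos hv] at dv
    exact hasRainbowMinCut_of_degree_le hn huv hu (by omega)
  · rcases le_total ((grid n).degree u) ((grid n).degree v) with h | h
    · exact hasRainbowMinCut_of_degree_le hn huv hu h
    · exact (hasRainbowMinCut_of_degree_le hn huv.symm hv h).symm

lemma three_le_of_isSRDColoring (hn : 3 ≤ n) {c : Sym2 (Fin 3 × Fin n) → ℕ} {k : ℕ}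
    (hk : ∀ e ∈ (grid n).edgeSet, c e < k) (hc : IsSRDColoring (grid n) c) : 3 ≤ k := by
  obtain ⟨F, hF, -, hinj⟩ := hc (1, ⟨0, by omega⟩) (1, ⟨1, by omega⟩) (by simp)
  calc 3 ≤ F.card := le_card_of_cutsBetween hn le_rfl
        (three_le_degree_grid (by omega) rfl) (three_le_degree_grid (by omega) rfl) hF
    _ ≤ (Finset.range k).card :=
        Finset.card_le_card_of_injOn c (fun e he => by simpa using hk e (hF.1 he)) hinj
    _ = k := Finset.card_range k

end Coloring

theorem stmt12 (n : ℕ) (hn : 4 ≤ n) :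
    srd (SimpleGraph.pathGraph 3 □ SimpleGraph.pathGraph n) = 3 := by
  have hmem : 3 ∈ {k | ∃ c : Sym2 (Fin 3 × Fin n) → ℕ,
      (∀ e ∈ (grid n).edgeSet, c e < k) ∧ IsSRDColoring (grid n) c} :=
    ⟨gridColoring n, fun e _ => gridColoring_lt e, isSRDColoring_gridColoring (by omega)⟩
  refine le_antisymm (Nat.sInf_le hmem) (le_csInf ⟨3, hmem⟩ ?_)
  rintro k ⟨c, hk, hc⟩
  exact three_le_of_isSRDColoring (by omega) hk hc
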